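/- For all i, j, g, h ∈ {0,1,…,d}, the matrices G_{ij} satisfy G_{ij} G_{gh} = δ_{jg} G_{ih}, where δ_{jg} is the Kronecker delta (i.e., the product is G_{ih} if j = g and 0 otherwise). -/

import Mathlib

open Finset Matrix

/-- Vertex set of the wreath product `K_{n 0} ≀ K_{n 1} ≀ ⋯ ≀ K_{n (d-1)}`
(paper indices `n_1, …, n_d` correspond to `n 0, …, n (d-1)`). -/
abbrev Vx (d : ℕ) (n : ℕ → ℕ) : Type := (i : Fin d) → Fin (n i)

/-- `delta x y = 0` if `x = y`; otherwise `delta x y` is the largest (1-based)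
index at which `x` and `y` differ. -/
def delta {d : ℕ} {n : ℕ → ℕ} (x y : Vx d n) : ℕ :=
  (Finset.univ.filter fun i => x i ≠ y i).sup fun i => (i : ℕ) + 1

/-- The `i`-th adjacency matrix of the wreath product: `(A i) x y = 1` iff `delta x y = i`. -/
noncomputable def A (d : ℕ) (n : ℕ → ℕ) (i : ℕ) : Matrix (Vx d n) (Vx d n) ℂ :=
  Matrix.of fun x y => if delta x y = i then 1 else 0

/-- The valencies: `k 0 = 1` and, for `1 ≤ i`, `k i = n_1 ⋯ n_{i-1} (n_i - 1)`,
i.e. `k i = n 0 ⋯ n (i-2) * (n (i-1) - 1)`. -/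
def k (n : ℕ → ℕ) (i : ℕ) : ℕ :=
  if i = 0 then 1 else (∏ j ∈ Finset.range (i - 1), n j) * (n (i - 1) - 1)

/-- The dual idempotent `E_i*` with respect to the base point `x₀`: the diagonal
0-1 matrix with `(E_i*)_{yy} = 1` iff `delta x₀ y = i`. -/
noncomputable def Es {d : ℕ} {n : ℕ → ℕ} (x₀ : Vx d n) (i : ℕ) :
    Matrix (Vx d n) (Vx d n) ℂ :=
  Matrix.of fun y z => if y = z ∧ delta x₀ y = i then 1 else 0

/-- The all-ones matrix `J`. -/
noncomputable def Jm (d : ℕ) (n : ℕ → ℕ) : Matrix (Vx d n) (Vx d n) ℂ :=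
  Matrix.of fun _ _ => 1

/-- The matrices `G i j`. -/
noncomputable def G {d : ℕ} {n : ℕ → ℕ} (x₀ : Vx d n) (i j : ℕ) :
    Matrix (Vx d n) (Vx d n) ℂ :=
  if i < j then ((k n j : ℂ))⁻¹ • (Es x₀ i * A d n j * Es x₀ j)
  else if j < i then ((k n j : ℂ))⁻¹ • (Es x₀ i * A d n i * Es x₀ j)
  else ((k n i : ℂ))⁻¹ • (Es x₀ i * Jm d n * Es x₀ i)

/-- The span `U` of the matrices `G i j`, `i, j ∈ [d]`. -/
noncomputable def Uspan {d : ℕ} {n : ℕ → ℕ} (x₀ : Vx d n) :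
    Submodule ℂ (Matrix (Vx d n) (Vx d n) ℂ) :=
  Submodule.span ℂ (Set.range fun p : Fin (d + 1) × Fin (d + 1) => G x₀ p.1 p.2)

/-- The Terwilliger algebra of the wreath product with respect to `x₀`. -/
noncomputable def Ter {d : ℕ} {n : ℕ → ℕ} (x₀ : Vx d n) :
    Subalgebra ℂ (Matrix (Vx d n) (Vx d n) ℂ) :=
  Algebra.adjoin ℂ
    ((Set.range fun i : Fin (d + 1) => A d n i) ∪ (Set.range fun i : Fin (d + 1) => Es x₀ i))

/-- The matrices `F i h`, for `1 ≤ i ≤ d` and `0 ≤ h ≤ i - 1`. -/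
noncomputable def F {d : ℕ} {n : ℕ → ℕ} (x₀ : Vx d n) (i h : ℕ) :
    Matrix (Vx d n) (Vx d n) ℂ :=
  if h < i - 1 then
    (∑ j ∈ Finset.range (h + 1), (k n j : ℂ))⁻¹ •
        (∑ j ∈ Finset.range (h + 1), Es x₀ i * A d n j * Es x₀ i)
      - (∑ j ∈ Finset.range (h + 2), (k n j : ℂ))⁻¹ •
          (∑ j ∈ Finset.range (h + 2), Es x₀ i * A d n j * Es x₀ i)
  else
    (∑ j ∈ Finset.range i, (k n j : ℂ))⁻¹ •
        (∑ j ∈ Finset.range i, Es x₀ i * A d n j * Es x₀ i)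
      - G x₀ i i

/-!
Let `s i` be the indicator vector of the sphere of radius `i` around `x₀`. The function `delta` is
an ultrametric, so two points at different distances from `x₀` are separated by the larger of the
two distances. Hence the adjacency matrix in the definition of `G x₀ i j` has all entries `1` on
the block cut out by the dual idempotents, and `G x₀ i j` is `(k n j)⁻¹` times the rank-one matrix
`s i (s j)ᵀ`. The spheres are pairwise disjoint and the one of radius `j` has `k n j` points.
-/

section WreathProduct

variable {d : ℕ} {n : ℕ → ℕ}

theorem delta_le_iff {x y : Vx d n} {j : ℕ} :
    delta x y ≤ j ↔ ∀ i : Fin d, j ≤ i → x i = y i := by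
  simp only [delta, Finset.sup_le_iff, mem_filter_univ, Order.add_one_le_iff]
  exact forall_congr' fun i => not_imp_comm.trans (by rw [not_lt])

theorem delta_comm (x y : Vx d n) : delta x y = delta y x := by
  simp only [delta, ne_comm]

theorem delta_le_max (x y z : Vx d n) : delta x z ≤ max (delta x y) (delta y z) :=
  delta_le_iff.2 fun i hi =>
    (delta_le_iff.1 le_rfl i (le_of_max_le_left hi)).trans
      (delta_le_iff.1 le_rfl i (le_of_max_le_right hi))

theorem delta_eq_of_delta_lt {x y z : Vx d n} (hlt : delta x y < delta x z) :
    delta y z = delta x z := by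
  have hxz : delta x z ≤ max (delta x y) (delta y z) := delta_le_max x y z
  have hyz : delta y z ≤ max (delta x y) (delta x z) := delta_comm y x ▸ delta_le_max y x z
  exact le_antisymm (hyz.trans (max_le hlt.le le_rfl))
    ((le_max_iff.1 hxz).resolve_left hlt.not_ge)

theorem filter_delta_le_eq_piFinset (x : Vx d n) (j : ℕ) :
    ({z | delta x z ≤ j} : Finset (Vx d n)) =
      Fintype.piFinset fun i : Fin d => if (i : ℕ) < j then univ else {x i} := by
  ext z
  simp only [mem_filter_univ, delta_le_iff, Fintype.mem_piFinset]
  refine forall_congr' fun i => ?_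
  by_cases hi : (i : ℕ) < j
  · simp [hi]
  · simp [hi, not_lt.1 hi, eq_comm]

theorem card_filter_delta_le (x : Vx d n) {j : ℕ} (hj : j ≤ d) :
    #{z | delta x z ≤ j} = ∏ i ∈ range j, n i := by
  calc #{z | delta x z ≤ j}
      = ∏ i : Fin d, if (i : ℕ) < j then n i else 1 := by
        simp only [filter_delta_le_eq_piFinset, Fintype.card_piFinset, apply_ite card,
          card_univ, Fintype.card_fin, card_singleton]
    _ = ∏ i ∈ range d with i < j, n i := by
        rw [Fin.prod_univ_eq_prod_range (fun i => if i < j then n i else 1) d, prod_filter]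
    _ = ∏ i ∈ range j, n i := by
        congr 1
        grind

theorem card_filter_delta_eq (x : Vx d n) {j : ℕ} (hj : j ≤ d) :
    #{z | delta x z = j} = k n j := by
  cases j with
  | zero => simpa [k] using card_filter_delta_le x hj
  | succ j =>
    have ball_succ :
        #{z | delta x z ≤ j + 1} = #{z | delta x z ≤ j} + #{z | delta x z = j + 1} := by
      simp only [Nat.le_succ_iff, filter_or]
      exact card_union_of_disjoint (disjoint_filter.2 fun z _ hle => by omega)
    rw [card_filter_delta_le x hj, card_filter_delta_le x (by omega), prod_range_succ] at ball_succ
    simp only [k, Nat.add_sub_cancel, Nat.succ_ne_zero, if_false, Nat.mul_sub, mul_one]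
    omega

theorem k_ne_zero {j : ℕ} (hn : ∀ i < j, 2 ≤ n i) : k n j ≠ 0 := by
  cases j with
  | zero => simp [k]
  | succ j =>
    have hprod : ∏ i ∈ range j, n i ≠ 0 := prod_ne_zero_iff.2 fun i hi => by
      have := hn i (Nat.lt_succ_of_lt (mem_range.1 hi))
      omega
    have hlast : n j - 1 ≠ 0 := by
      have := hn j j.lt_succ_self
      omega
    exact mul_ne_zero hprod hlast

/-- The indicator vector of the sphere of radius `i` around `x₀`, that is, the diagonal of the dual
idempotent `Es x₀ i`. The matrices `G x₀ i j` are multiples of outer products of these vectors. -/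
noncomputable def sphereVec (x₀ : Vx d n) (i : ℕ) : Vx d n → ℂ :=
  fun y => if delta x₀ y = i then 1 else 0

theorem sphereVec_dotProduct_self (x₀ : Vx d n) {j : ℕ} (hj : j ≤ d) :
    sphereVec x₀ j ⬝ᵥ sphereVec x₀ j = k n j := by
  simp only [dotProduct, sphereVec, mul_boole, ← ite_and, and_self, sum_boole,
    card_filter_delta_eq x₀ hj]

theorem sphereVec_dotProduct_of_ne (x₀ : Vx d n) {i j : ℕ} (hij : i ≠ j) :
    sphereVec x₀ i ⬝ᵥ sphereVec x₀ j = 0 :=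
  sum_eq_zero fun y _ => by grind [sphereVec]

theorem Es_eq_diagonal (x₀ : Vx d n) (i : ℕ) : Es x₀ i = diagonal (sphereVec x₀ i) := by
  ext y z
  by_cases hyz : y = z <;> simp [Es, sphereVec, hyz]

theorem Es_mul_mul_Es_eq_vecMulVec {x₀ : Vx d n} {i j : ℕ} {M : Matrix (Vx d n) (Vx d n) ℂ}
    (hM : ∀ y z, delta x₀ y = i → delta x₀ z = j → M y z = 1) :
    Es x₀ i * M * Es x₀ j = vecMulVec (sphereVec x₀ i) (sphereVec x₀ j) := by
  ext y z
  rw [Es_eq_diagonal, Es_eq_diagonal, mul_diagonal, diagonal_mul, vecMulVec_apply]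
  by_cases hy : delta x₀ y = i <;> by_cases hz : delta x₀ z = j <;> simp [sphereVec, hy, hz, hM]

theorem G_eq_smul_vecMulVec (x₀ : Vx d n) (i j : ℕ) :
    G x₀ i j = (k n j : ℂ)⁻¹ • vecMulVec (sphereVec x₀ i) (sphereVec x₀ j) := by
  rcases lt_trichotomy i j with hij | rfl | hji
  · rw [G, if_pos hij, Es_mul_mul_Es_eq_vecMulVec]
    rintro y z rfl rfl
    simp [A, delta_eq_of_delta_lt hij]
  · rw [G, if_neg (lt_irrefl i), if_neg (lt_irrefl i), Es_mul_mul_Es_eq_vecMulVec]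
    simp [Jm]
  · rw [G, if_neg hji.not_gt, if_pos hji, Es_mul_mul_Es_eq_vecMulVec]
    rintro y z rfl rfl
    simp [A, delta_comm y z, delta_eq_of_delta_lt hji]

theorem G_mul_G (x₀ : Vx d n) (i j g h : ℕ) :
    G x₀ i j * G x₀ g h =
      ((k n j : ℂ)⁻¹ * (sphereVec x₀ j ⬝ᵥ sphereVec x₀ g)) • G x₀ i h := by
  simp only [G_eq_smul_vecMulVec, smul_mul, Matrix.mul_smul, vecMulVec_mul_vecMulVec,
    vecMulVec_smul, smul_smul]
  congr 1
  ring

end WreathProduct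

/-- `G i j * G g h = δ_{j g} G i h`. -/
theorem stmt15 (d : ℕ) (hd : 1 ≤ d) (n : ℕ → ℕ) (hn : ∀ i < d, 2 ≤ n i)
    (x₀ : Vx d n) (i j g h : ℕ) (hi : i ≤ d) (hj : j ≤ d) (hg : g ≤ d) (hh : h ≤ d) :
    G x₀ i j * G x₀ g h = if j = g then G x₀ i h else 0 := by
  rw [G_mul_G]
  split_ifs with hjg
  · subst hjg
    have hk : (k n j : ℂ) ≠ 0 :=
      Nat.cast_ne_zero.2 (k_ne_zero fun i hij => hn i (hij.trans_le hj))
    rw [sphereVec_dotProduct_self x₀ hj, inv_mul_cancel₀ hk, one_smul]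
  · rw [sphereVec_dotProduct_of_ne x₀ hjg, mul_zero, zero_smul]
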